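/- arXiv:1712.02416 — 2 statements merged into one kernel-verified Lean document; each statement's English description precedes it below -/
import Mathlib

section
/- For $n = 3$ and independent indeterminates $x_1,x_2,x_3,y_1,y_2,y_3,\alpha$: $\det\left( \frac{\alpha}{(x_i-y_j+\alpha)(x_i-y_j)} \right)_{1\le i,j\le 3} = \alpha^{9} \frac{\prod_{1\le i<j\le 3}(x_i-x_j)(y_j-y_i)}{\prod_{i,j}(x_i-y_j)(x_i-y_j+\alpha)} \cdot S$, where $S$ is the sum of the seven terms: $(x_1-y_2)(x_1-y_3)(x_2-y_1)(x_2-y_3)(x_3-y_1)(x_3-y_2)\alpha^{-6}$; $(x_1-y_2)(x_1-y_3)(x_2-y_1)(x_2-y_2+\alpha)(x_3-y_1)(x_3-y_3+\alpha)\alpha^{-6}$; $(x_1-y_1+\alpha)(x_1-y_3)(x_2-y_2+\alpha)(x_2-y_3)(x_3-y_1)(x_3-y_2)\alpha^{-6}$; $(x_1-y_1+\alpha)(x_1-y_3)(x_2-y_1+\alpha)(x_2-y_2)(x_3-y_2+\alpha)(x_3-y_3+\alpha)\alpha^{-6}$; $(x_1-y_1+\alpha)(x_1-y_2+\alpha)(x_2-y_1+\alpha)(x_2-y_3+\alpha)(x_3-y_2+\alpha)(x_3-y_3+\alpha)\alpha^{-6}$;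 $(x_1-y_1+\alpha)(x_1-y_2+\alpha)(x_2-y_2)(x_2-y_3+\alpha)(x_3-y_1)(x_3-y_3+\alpha)\alpha^{-6}$; $(x_1-y_1+\alpha)(x_1-y_3)(x_3-y_1)(x_3-y_3+\alpha)\alpha^{-4}$. -/
open Finset

/-- Reduced determinant identity after column operations, normalised at `y1 = 0`. -/
theorem aux_reduced {K : Type*} [Field K] (x0 x1 x2 y0 y2 α : K) :
    (((x0) * (x0 + α)) * ((x0 - y2) * (x0 - y2 + α))) * ((((x1 - y2) * (x1 - y2 + α)) * ((x1 - y0) + (x1) + α)) * (((x2) + α) * ((x2 - y0) + (x2 - y2) + α) + (x2 - y0) * (x2 - y2)) - (((x1) + α) * ((x1 - y0) + (x1 - y2) + α) + (x1 - y0) * (x1 - y2)) * (((x2 - y2) * (x2 - y2 + α)) * ((x2 - y0) + (x2) + α)))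
    + (((x0 - y2) * (x0 - y2 + α)) * ((x0 - y0) + (x0) + α)) * ((((x1) + α) * ((x1 - y0) + (x1 - y2) + α) + (x1 - y0) * (x1 - y2)) * (((x2) * (x2 + α)) * ((x2 - y2) * (x2 - y2 + α))) - (((x1) * (x1 + α)) * ((x1 - y2) * (x1 - y2 + α))) * (((x2) + α) * ((x2 - y0) + (x2 - y2) + α) + (x2 - y0) * (x2 - y2)))
    + (((x0) + α) * ((x0 - y0) + (x0 - y2) + α) + (x0 - y0) * (x0 - y2)) * ((((x1) * (x1 + α)) * ((x1 - y2) * (x1 - y2 + α))) * (((x2 - y2) * (x2 - y2 + α)) * ((x2 - y0) + (x2) + α)) - (((x1 - y2) * (x1 - y2 + α)) * ((x1 - y0) + (x1) + α)) * (((x2) * (x2 + α)) * ((x2 - y2) * (x2 - y2 + α))))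
    = (x0 - x1) * (x0 - x2) * (x1 - x2) * ((x0) * (x0 - y2) * (x1 - y0) * (x1 - y2) * (x2 - y0) * (x2)
    + (x0) * (x0 - y2) * (x1 - y0) * (x1 + α) * (x2 - y0) * (x2 - y2 + α)
    + (x0 - y0 + α) * (x0 - y2) * (x1 + α) * (x1 - y2) * (x2 - y0) * (x2)
    + (x0 - y0 + α) * (x0 - y2) * (x1 - y0 + α) * (x1) * (x2 + α) * (x2 - y2 + α)
    + (x0 - y0 + α) * (x0 + α) * (x1 - y0 + α) * (x1 - y2 + α) * (x2 + α) * (x2 - y2 + α)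
    + (x0 - y0 + α) * (x0 + α) * (x1) * (x1 - y2 + α) * (x2 - y0) * (x2 - y2 + α)
    + (x0 - y0 + α) * (x0 - y2) * (x2 - y0) * (x2 - y2 + α) * α ^ 2) := by
  ring

/-- Reduced determinant identity after column operations. -/
theorem aux_reduced' {K : Type*} [Field K] (x0 x1 x2 y0 y1 y2 α : K) :
    (((x0 - y1) * (x0 - y1 + α)) * ((x0 - y2) * (x0 - y2 + α))) * ((((x1 - y2) * (x1 - y2 + α)) * ((x1 - y0) + (x1 - y1) + α)) * (((x2 - y1) + α) * ((x2 - y0) + (x2 - y2) + α) + (x2 - y0) * (x2 - y2)) - (((x1 - y1) + α) * ((x1 - y0) + (x1 - y2) + α) + (x1 - y0) * (x1 - y2)) * (((x2 - y2) * (x2 - y2 + α)) * ((x2 - y0) + (x2 - y1) + α)))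
    + (((x0 - y2) * (x0 - y2 + α)) * ((x0 - y0) + (x0 - y1) + α)) * ((((x1 - y1) + α) * ((x1 - y0) + (x1 - y2) + α) + (x1 - y0) * (x1 - y2)) * (((x2 - y1) * (x2 - y1 + α)) * ((x2 - y2) * (x2 - y2 + α))) - (((x1 - y1) * (x1 - y1 + α)) * ((x1 - y2) * (x1 - y2 + α))) * (((x2 - y1) + α) * ((x2 - y0) + (x2 - y2) + α) + (x2 - y0) * (x2 - y2)))
    + (((x0 - y1) + α) * ((x0 - y0) + (x0 - y2) + α) + (x0 - y0) * (x0 - y2)) * ((((x1 - y1) * (x1 - y1 + α)) * ((x1 - y2) * (x1 - y2 + α))) * (((x2 - y2) * (x2 - y2 + α)) * ((x2 - y0) + (x2 - y1) + α)) - (((x1 - y2) * (x1 - y2 + α)) * ((x1 - y0) + (x1 - y1) + α)) * (((x2 - y1) * (x2 - y1 + α)) * ((x2 - y2) * (x2 - y2 + α))))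
    = (x0 - x1) * (x0 - x2) * (x1 - x2) * ((x0 - y1) * (x0 - y2) * (x1 - y0) * (x1 - y2) * (x2 - y0) * (x2 - y1)
    + (x0 - y1) * (x0 - y2) * (x1 - y0) * (x1 - y1 + α) * (x2 - y0) * (x2 - y2 + α)
    + (x0 - y0 + α) * (x0 - y2) * (x1 - y1 + α) * (x1 - y2) * (x2 - y0) * (x2 - y1)
    + (x0 - y0 + α) * (x0 - y2) * (x1 - y0 + α) * (x1 - y1) * (x2 - y1 + α) * (x2 - y2 + α)
    + (x0 - y0 + α) * (x0 - y1 + α) * (x1 - y0 + α) * (x1 - y2 + α) * (x2 - y1 + α) * (x2 - y2 + α)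
    + (x0 - y0 + α) * (x0 - y1 + α) * (x1 - y1) * (x1 - y2 + α) * (x2 - y0) * (x2 - y2 + α)
    + (x0 - y0 + α) * (x0 - y2) * (x2 - y0) * (x2 - y2 + α) * α ^ 2) := by
  have h := aux_reduced (x0 - y1) (x1 - y1) (x2 - y1) (y0 - y1) (y2 - y1) α
  simp only [sub_sub_sub_cancel_right] at h
  exact h

/-- The three column operations, row by row, in an abstract determinant. -/
theorem aux_columns {K : Type*} [Field K]
    (f0 g0 h0 u0 w0 f1 g1 h1 u1 w1 f2 g2 h2 u2 w2 a b c : K)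
    (e0 : g0 = f0 + a * u0) (e1 : g1 = f1 + a * u1) (e2 : g2 = f2 + a * u2)
    (k0 : h0 = g0 + b * (u0 + c * w0)) (k1 : h1 = g1 + b * (u1 + c * w1))
    (k2 : h2 = g2 + b * (u2 + c * w2)) :
    f0 * (g1 * h2 - h1 * g2) + g0 * (h1 * f2 - f1 * h2) + h0 * (f1 * g2 - g1 * f2)
    = a * b * c * (f0 * (u1 * w2 - w1 * u2) + u0 * (w1 * f2 - f1 * w2)
      + w0 * (f1 * u2 - u1 * f2)) := by
  subst k0 k1 k2 e0 e1 e2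
  ring

/-- Polynomial form of the identity. -/
theorem aux_poly {K : Type*} [Field K] (x0 x1 x2 y0 y1 y2 α : K) :
    (((x0 - y1) * (x0 - y1 + α)) * ((x0 - y2) * (x0 - y2 + α))) * ((((x1 - y0) * (x1 - y0 + α)) * ((x1 - y2) * (x1 - y2 + α))) * (((x2 - y0) * (x2 - y0 + α)) * ((x2 - y1) * (x2 - y1 + α))) - (((x1 - y0) * (x1 - y0 + α)) * ((x1 - y1) * (x1 - y1 + α))) * (((x2 - y0) * (x2 - y0 + α)) * ((x2 - y2) * (x2 - y2 + α))))
    + (((x0 - y0) * (x0 - y0 + α)) * ((x0 - y2) * (x0 - y2 + α))) * ((((x1 - y0) * (x1 - y0 + α)) * ((x1 - y1) * (x1 - y1 + α))) * (((x2 - y1) * (x2 - y1 + α)) * ((x2 - y2) * (x2 - y2 + α))) - (((x1 - y1) * (x1 - y1 + α)) * ((x1 - y2) * (x1 - y2 + α))) * (((x2 - y0) * (x2 - y0 + α)) * ((x2 - y1) * (x2 - y1 + α))))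
    + (((x0 - y0) * (x0 - y0 + α)) * ((x0 - y1) * (x0 - y1 + α))) * ((((x1 - y1) * (x1 - y1 + α)) * ((x1 - y2) * (x1 - y2 + α))) * (((x2 - y0) * (x2 - y0 + α)) * ((x2 - y2) * (x2 - y2 + α))) - (((x1 - y0) * (x1 - y0 + α)) * ((x1 - y2) * (x1 - y2 + α))) * (((x2 - y1) * (x2 - y1 + α)) * ((x2 - y2) * (x2 - y2 + α))))
    = (y1 - y0) * (y2 - y1) * (y2 - y0) * ((x0 - x1) * (x0 - x2) * (x1 - x2) * ((x0 - y1) * (x0 - y2) * (x1 - y0) * (x1 - y2) * (x2 - y0) * (x2 - y1)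
    + (x0 - y1) * (x0 - y2) * (x1 - y0) * (x1 - y1 + α) * (x2 - y0) * (x2 - y2 + α)
    + (x0 - y0 + α) * (x0 - y2) * (x1 - y1 + α) * (x1 - y2) * (x2 - y0) * (x2 - y1)
    + (x0 - y0 + α) * (x0 - y2) * (x1 - y0 + α) * (x1 - y1) * (x2 - y1 + α) * (x2 - y2 + α)
    + (x0 - y0 + α) * (x0 - y1 + α) * (x1 - y0 + α) * (x1 - y2 + α) * (x2 - y1 + α) * (x2 - y2 + α)
    + (x0 - y0 + α) * (x0 - y1 + α) * (x1 - y1) * (x1 - y2 + α) * (x2 - y0) * (x2 - y2 + α)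
    + (x0 - y0 + α) * (x0 - y2) * (x2 - y0) * (x2 - y2 + α) * α ^ 2)) := by
  rw [← aux_reduced']
  apply aux_columns <;> ring

/-- The `n = 3` Jack limit of the Izergin–Korepin determinant: the determinant equals the
prefactor times the sum of the weights of the seven `3×3` alternating sign matrices. -/
theorem stmt8 {K : Type*} [Field K] [CharZero K] (x y : Fin 3 → K) (α : K) (hα : α ≠ 0)
    (h1 : ∀ i j, x i - y j ≠ 0) (h2 : ∀ i j, x i - y j + α ≠ 0) :
    Matrix.det (Matrix.of fun i j : Fin 3 => α / ((x i - y j + α) * (x i - y j)))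
      = α ^ 9 *
          ((x 0 - x 1) * (y 1 - y 0) * ((x 0 - x 2) * (y 2 - y 0)) *
            ((x 1 - x 2) * (y 2 - y 1))) /
          (∏ i, ∏ j, ((x i - y j) * (x i - y j + α)))
        * ((x 0 - y 1) * (x 0 - y 2) * (x 1 - y 0) * (x 1 - y 2) * (x 2 - y 0) *
              (x 2 - y 1) / α ^ 6
          + (x 0 - y 1) * (x 0 - y 2) * (x 1 - y 0) * (x 1 - y 1 + α) * (x 2 - y 0) *
              (x 2 - y 2 + α) / α ^ 6
          + (x 0 - y 0 + α) * (x 0 - y 2) * (x 1 - y 1 + α) * (x 1 - y 2) * (x 2 - y 0) *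
              (x 2 - y 1) / α ^ 6
          + (x 0 - y 0 + α) * (x 0 - y 2) * (x 1 - y 0 + α) * (x 1 - y 1) *
              (x 2 - y 1 + α) * (x 2 - y 2 + α) / α ^ 6
          + (x 0 - y 0 + α) * (x 0 - y 1 + α) * (x 1 - y 0 + α) * (x 1 - y 2 + α) *
              (x 2 - y 1 + α) * (x 2 - y 2 + α) / α ^ 6
          + (x 0 - y 0 + α) * (x 0 - y 1 + α) * (x 1 - y 1) * (x 1 - y 2 + α) *
              (x 2 - y 0) * (x 2 - y 2 + α) / α ^ 6
          + (x 0 - y 0 + α) * (x 0 - y 2) * (x 2 - y 0) * (x 2 - y 2 + α) / α ^ 4) := by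
  
  have P := aux_poly (x 0) (x 1) (x 2) (y 0) (y 1) (y 2) α
  rw [Matrix.det_fin_three]
  simp only [Matrix.of_apply, Fin.prod_univ_three]
  have d00 := h1 0 0
  have e00 := h2 0 0
  have d01 := h1 0 1
  have e01 := h2 0 1
  have d02 := h1 0 2
  have e02 := h2 0 2
  have d10 := h1 1 0
  have e10 := h2 1 0
  have d11 := h1 1 1
  have e11 := h2 1 1
  have d12 := h1 1 2
  have e12 := h2 1 2
  have d20 := h1 2 0
  have e20 := h2 2 0
  have d21 := h1 2 1
  have e21 := h2 2 1
  have d22 := h1 2 2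
  have e22 := h2 2 2
  generalize hd00 : x 0 - y 0 = D00 at *
  generalize he00 : D00 + α = E00 at *
  generalize hd01 : x 0 - y 1 = D01 at *
  generalize he01 : D01 + α = E01 at *
  generalize hd02 : x 0 - y 2 = D02 at *
  generalize he02 : D02 + α = E02 at *
  generalize hd10 : x 1 - y 0 = D10 at *
  generalize he10 : D10 + α = E10 at *
  generalize hd11 : x 1 - y 1 = D11 at *
  generalize he11 : D11 + α = E11 at *
  generalize hd12 : x 1 - y 2 = D12 at *
  generalize he12 : D12 + α = E12 at *
  generalize hd20 : x 2 - y 0 = D20 at *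
  generalize he20 : D20 + α = E20 at *
  generalize hd21 : x 2 - y 1 = D21 at *
  generalize he21 : D21 + α = E21 at *
  generalize hd22 : x 2 - y 2 = D22 at *
  generalize he22 : D22 + α = E22 at *
  clear h1 h2
  generalize (x 0 - x 1) = X01 at *
  generalize (x 0 - x 2) = X02 at *
  generalize (x 1 - x 2) = X12 at *
  generalize (y 1 - y 0) = Y01 at *
  generalize (y 2 - y 0) = Y02 at *
  generalize (y 2 - y 1) = Y12 at *
  clear hd00 he00 hd01 he01 hd02 he02 hd10 he10 hd11 he11 hd12 he12 hd20 he20 hd21 he21 hd22 he22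
  field_simp
  linear_combination P
end

section
/- In the exterior-algebra setting of symmetric superpolynomials: the operators $e_n$ (multiplication by the $n$-th elementary symmetric function $e_n = \sum_{i_1 < \cdots < i_n} z_{i_1}\cdots z_{i_n}$), $\tilde e_{n-1}$ (multiplication by $\tilde e_{n-1} = \sum_{\sigma}' \theta_{\sigma(1)} z_{\sigma(2)}\cdots z_{\sigma(n)}$, the monomial $m_{(0;1^{n-1})}$), and $q^\perp = \sum_{i=1}^N z_i \partial_{\theta_i}$ satisfy the anticommutation relation $\{\tilde e_{n-1}, q^\perp\} = n\, e_n$ for all $n \geq 1$, as operators on polynomials in commuting variables $z_1,\dots,z_N$ and anticommuting variables $\theta_1,\dots,\theta_N$. -/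
set_option synthInstance.maxHeartbeats 1000000
set_option maxHeartbeats 1000000
open TensorProduct MvPolynomial Finset

noncomputable section

variable (N : ℕ)

abbrev SA := MvPolynomial (Fin N) ℚ ⊗[ℚ] ExteriorAlgebra ℚ (Fin N → ℚ)

/-- the anticommuting generator `θᵢ` -/
def theta (i : Fin N) : SA N := 1 ⊗ₜ ExteriorAlgebra.ι ℚ (Pi.single i 1)

/-- `∂/∂θᵢ`, the interior product with the `i`-th coordinate functional -/
def dtheta (i : Fin N) :
    ExteriorAlgebra ℚ (Fin N → ℚ) →ₗ[ℚ] ExteriorAlgebra ℚ (Fin N → ℚ) :=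
  CliffordAlgebra.contractLeft (LinearMap.proj i)

/-- `q^⊥ = Σ zᵢ ∂/∂θᵢ` -/
def qperp : SA N →ₗ[ℚ] SA N :=
  ∑ i : Fin N, (LinearMap.mulLeft ℚ ((X i : MvPolynomial (Fin N) ℚ) ⊗ₜ 1)).comp
    (TensorProduct.map LinearMap.id (dtheta N i))

/-- the elementary symmetric function `eₙ` as an element of the superalgebra -/
def esup (n : ℕ) : SA N := (esymm (Fin N) ℚ n) ⊗ₜ 1

/-- `ẽₖ = Σ_j θ_j Σ_{i₁<…<i_k, i_ℓ ≠ j} z_{i₁}⋯z_{i_k}` -/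
def etilde (k : ℕ) : SA N :=
  ∑ j : Fin N, ∑ S ∈ (univ.erase j).powersetCard k,
    (∏ i ∈ S, X i : MvPolynomial (Fin N) ℚ) ⊗ₜ ExteriorAlgebra.ι ℚ (Pi.single j 1)

end

theorem aux_comb (N k : ℕ) :
    ∑ j : Fin N, ∑ S ∈ (univ.erase j).powersetCard k,
      (∏ i ∈ S, X i : MvPolynomial (Fin N) ℚ) * X j
    = ((k + 1 : ℕ) : ℚ) • esymm (Fin N) ℚ (k + 1) := by
  have h : ((k + 1 : ℕ) : ℚ) • esymm (Fin N) ℚ (k + 1)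
      = ∑ T ∈ powersetCard (k + 1) (univ : Finset (Fin N)), ∑ j ∈ T,
        (∏ i ∈ T, X i : MvPolynomial (Fin N) ℚ) := by
    rw [esymm, Finset.smul_sum]
    refine Finset.sum_congr rfl fun T hT => ?_
    rw [Finset.sum_const, (Finset.mem_powersetCard.1 hT).2, Nat.cast_smul_eq_nsmul]
  rw [h, Finset.sum_sigma', Finset.sum_sigma']
  refine Finset.sum_bij' (fun a _ => ⟨insert a.1 a.2, a.1⟩) (fun b _ => ⟨b.2, b.1.erase b.2⟩)
    ?_ ?_ ?_ ?_ ?_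
  · rintro ⟨j, S⟩ ha
    simp only [mem_sigma, mem_univ, mem_powersetCard, true_and, subset_univ] at ha ⊢
    have hj : j ∉ S := fun hj => by simpa using ha.1 hj
    simp [Finset.card_insert_of_notMem hj, ha.2]
  · rintro ⟨T, j⟩ ha
    simp only [mem_sigma, mem_univ, mem_powersetCard, true_and, subset_univ] at ha ⊢
    exact ⟨Finset.erase_subset_erase _ (subset_univ _), by
      rw [Finset.card_erase_of_mem ha.2, ha.1]; rfl⟩
  · rintro ⟨j, S⟩ ha
    simp only [mem_sigma, mem_univ, mem_powersetCard, true_and] at ha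
    have hj : j ∉ S := fun hj => by simpa using ha.1 hj
    simp [Finset.erase_insert hj]
  · rintro ⟨T, j⟩ ha
    simp only [mem_sigma] at ha
    simp [Finset.insert_erase ha.2]
  · rintro ⟨j, S⟩ ha
    simp only [mem_sigma, mem_univ, mem_powersetCard, true_and] at ha
    have hj : j ∉ S := fun hj => by simpa using ha.1 hj
    simp only [Finset.prod_insert hj, mul_comm]

theorem qperp_tmul (N : ℕ) (p : MvPolynomial (Fin N) ℚ) (w : ExteriorAlgebra ℚ (Fin N → ℚ)) :
    qperp N (p ⊗ₜ w) = ∑ i : Fin N, (X i * p) ⊗ₜ (dtheta N i w) := by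
  simp [qperp, LinearMap.sum_apply]

theorem dtheta_mul (N : ℕ) (i j : Fin N) (w : ExteriorAlgebra ℚ (Fin N → ℚ)) :
    dtheta N i (ExteriorAlgebra.ι ℚ (Pi.single j 1) * w)
      = (if i = j then w else 0) - ExteriorAlgebra.ι ℚ (Pi.single j 1) * dtheta N i w := by
  have h := CliffordAlgebra.contractLeft_ι_mul (Q := (0 : QuadraticForm ℚ (Fin N → ℚ)))
    (d := LinearMap.proj i) (Pi.single j 1) w
  refine h.trans ?_
  congr 1
  by_cases hij : i = j
  · subst hij; simp
  · simp [hij]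

theorem aux_single (N : ℕ) (f : MvPolynomial (Fin N) ℚ) (j : Fin N) (x : SA N) :
    (f ⊗ₜ ExteriorAlgebra.ι ℚ (Pi.single j 1) : SA N) * qperp N x
      + qperp N ((f ⊗ₜ ExteriorAlgebra.ι ℚ (Pi.single j 1) : SA N) * x)
    = ((f * X j) ⊗ₜ 1 : SA N) * x := by
  induction x using TensorProduct.induction_on with
  | zero => simp
  | add x y hx hy =>
    rw [map_add, mul_add, mul_add, map_add, mul_add, ← hx, ← hy]; abel
  | tmul p w =>
    rw [Algebra.TensorProduct.tmul_mul_tmul, qperp_tmul, qperp_tmul, Finset.mul_sum,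
      ← Finset.sum_add_distrib, Algebra.TensorProduct.tmul_mul_tmul, one_mul,
      Finset.sum_eq_single j]
    · rw [dtheta_mul, Algebra.TensorProduct.tmul_mul_tmul, if_pos rfl,
        show f * (X j * p) = X j * (f * p) by ring, ← TensorProduct.tmul_add,
        add_sub_cancel, show X j * (f * p) = f * X j * p by ring]
    · intro i _ hi
      rw [dtheta_mul, Algebra.TensorProduct.tmul_mul_tmul, if_neg hi,
        show f * (X i * p) = X i * (f * p) by ring, ← TensorProduct.tmul_add,
        add_sub_cancel, TensorProduct.tmul_zero]
    · intro h; exact absurd (mem_univ _) h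

/-- The anticommutation relation `{ẽ_{n-1}, q^⊥} = n eₙ` (equation (3.20) of the paper). -/
theorem stmt9 (N n : ℕ) (hn : 1 ≤ n) (hN : n ≤ N) :
    (LinearMap.mulLeft ℚ (etilde N (n - 1))).comp (qperp N)
      + (qperp N).comp (LinearMap.mulLeft ℚ (etilde N (n - 1)))
    = (n : ℚ) • LinearMap.mulLeft ℚ (esup N n) := by
  obtain ⟨k, rfl⟩ : ∃ k, n = k + 1 := ⟨n - 1, by omega⟩
  rw [Nat.add_sub_cancel]
  refine LinearMap.ext fun x => ?_
  rw [LinearMap.add_apply, LinearMap.comp_apply, LinearMap.comp_apply, LinearMap.smul_apply,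
    LinearMap.mulLeft_apply, LinearMap.mulLeft_apply, LinearMap.mulLeft_apply, esup,
    ← smul_mul_assoc, TensorProduct.smul_tmul', ← aux_comb]
  simp only [etilde, Finset.sum_mul, map_sum, TensorProduct.sum_tmul, ← Finset.sum_add_distrib,
    aux_single]
end
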